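/- Let (S, d_S) be a separable metric space with the Radon property and fix p ≥ 1. For p_0 ∈ [S]_p and a Borel probability measure ζ on [S]_p, let ρ[ζ] be the probability measure on S^∞ given by ρ[ζ](·) := ∫_{[S]_p} 𝔭^∞(·) ζ(d𝔭), and for n ≥ 0, m ≥ 1 let ẽ_{n,m} : S^∞ → [S] be the map ω ↦ (1/m) Σ_{i=1}^m δ_{ω_{i+n}}. Then for every m ∈ ℕ, d^{(p)}_{[[S]_p]}( ρ[ζ] ∘ ẽ_{n,m}^{−1}, p_0^∞ ∘ ẽ_{n,m}^{−1} ) ≤ d^{(p)}_{[[S]_p]}( ζ, δ_{p_0} ). -/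

import Mathlib

open MeasureTheory ProbabilityTheory
open scoped ENNReal

noncomputable section

/-- The `p`-Wasserstein-type distance associated with a cost function `c`. -/
noncomputable def wassW {X : Type*} [MeasurableSpace X] (c : X → X → ℝ) (p : ℝ)
    (μ ν : Measure X) : ℝ :=
  sInf {r : ℝ | ∃ γ : Measure (X × X), γ.map Prod.fst = μ ∧ γ.map Prod.snd = ν ∧
    r = (∫ z, c z.1 z.2 ^ p ∂γ) ^ (1 / p)}

/-- Membership in `[S]_p`: a Borel probability measure with finite `p`-th moment. -/
def MemWp {S : Type*} [MeasurableSpace S] [MetricSpace S] (p : ℝ) (𝔭 : Measure S) : Prop :=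
  IsProbabilityMeasure 𝔭 ∧ ∃ x₀ : S, Integrable (fun x => dist x x₀ ^ p) 𝔭

/-- The empirical measure `ẽ_{n,m}(ω) = (1/m) Σ_{i=1}^m δ_{ω_{i+n}}` of the block
of coordinates `n+1, …, n+m`. -/
noncomputable def empShift {S : Type*} [MeasurableSpace S] (n m : ℕ) (ω : ℕ → S) :
    Measure S :=
  (m : ℝ≥0∞)⁻¹ • ∑ i ∈ Finset.range m, Measure.dirac (ω (i + n))

/-!
Draw `m` i.i.d. pairs from a coupling of `𝔭` and `p₀`. The empirical measure of the pairs is a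
coupling of the empirical measures of the two coordinates, and its mean transport cost is the cost
of the coupling of `𝔭` and `p₀`. Choosing that coupling nearly optimal and measurable in `𝔭`, and
integrating over `ζ`, bounds the left-hand side by the mean of `W_p(𝔭, p₀)^p`, which is what the
only coupling of `ζ` and `δ_{p₀}` costs.

For the measurable choice, round the first coordinate to a label in a finite set. A coupling then
matters only through the splitting of `p₀` according to the label, and countably many splittings,
rebalanced so that their masses are those prescribed by `𝔭`, come arbitrarily close to the best one.
Hence a sequence of couplings, measurable in `𝔭`, approaches the optimal cost for every `𝔭`, and one
can take the first one which is close enough.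

A Bochner integral of a non-integrable cost is `0`, so a divergent right-hand side has to be matched
by a divergent transport cost on the left. It is, because passing to empirical measures preserves
mean moments.
-/

section Coupling

variable {X Y : Type*} [MeasurableSpace X] [MeasurableSpace Y] {c : X → Y → ℝ≥0∞}
  {γ : Measure (X × Y)} {μ : Measure X} {ν : Measure Y}

/-- `γ` is a coupling (transport plan) of its two marginals `μ` and `ν`. -/
structure IsCoupling (γ : Measure (X × Y)) (μ : Measure X) (ν : Measure Y) : Prop where
  map_fst : γ.map Prod.fst = μ
  map_snd : γ.map Prod.snd = ν

/-- The Kantorovich optimal transport cost of `μ` and `ν` for an `ℝ≥0∞`-valued cost `c`. Lower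
integrals are used, so that no measurability of `c` is needed. -/
def transportCost (c : X → Y → ℝ≥0∞) (μ : Measure X) (ν : Measure Y) : ℝ≥0∞ :=
  ⨅ (γ : Measure (X × Y)) (_ : IsCoupling γ μ ν), ∫⁻ z, c z.1 z.2 ∂γ

lemma isCoupling_prod (μ : Measure X) (ν : Measure Y) [IsProbabilityMeasure μ]
    [IsProbabilityMeasure ν] : IsCoupling (μ.prod ν) μ ν :=
  ⟨by simp, by simp⟩

namespace IsCoupling

lemma isProbabilityMeasure [IsProbabilityMeasure μ] (h : IsCoupling γ μ ν) :
    IsProbabilityMeasure γ := by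
  have : IsProbabilityMeasure (γ.map Prod.fst) := h.map_fst ▸ inferInstance
  exact Measure.isProbabilityMeasure_of_map Prod.fst

lemma lintegral_fst (h : IsCoupling γ μ ν) {f : X → ℝ≥0∞} (hf : Measurable f) :
    ∫⁻ z, f z.1 ∂γ = ∫⁻ x, f x ∂μ := by
  rw [← h.map_fst, lintegral_map hf measurable_fst]

lemma lintegral_snd (h : IsCoupling γ μ ν) {g : Y → ℝ≥0∞} (hg : Measurable g) :
    ∫⁻ z, g z.2 ∂γ = ∫⁻ y, g y ∂ν := by
  rw [← h.map_snd, lintegral_map hg measurable_snd]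

lemma ae_fst (h : IsCoupling γ μ ν) {P : X → Prop} (hP : ∀ᵐ x ∂μ, P x) : ∀ᵐ z ∂γ, P z.1 :=
  ae_of_ae_map measurable_fst.aemeasurable (h.map_fst ▸ hP)

lemma ae_snd (h : IsCoupling γ μ ν) {P : Y → Prop} (hP : ∀ᵐ y ∂ν, P y) : ∀ᵐ z ∂γ, P z.2 :=
  ae_of_ae_map measurable_snd.aemeasurable (h.map_snd ▸ hP)

lemma lintegral_le_mul_add (hγ : IsCoupling γ μ ν) {f : X → ℝ≥0∞} {g : Y → ℝ≥0∞}
    (hf : Measurable f) (hg : Measurable g) {C : ℝ≥0∞} (hC : C ≠ ∞)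
    (h : ∀ x y, c x y ≤ C * (f x + g y)) :
    ∫⁻ z, c z.1 z.2 ∂γ ≤ C * (∫⁻ x, f x ∂μ + ∫⁻ y, g y ∂ν) := by
  calc ∫⁻ z, c z.1 z.2 ∂γ ≤ ∫⁻ z, C * (f z.1 + g z.2) ∂γ := lintegral_mono fun z => h z.1 z.2
    _ = C * (∫⁻ x, f x ∂μ + ∫⁻ y, g y ∂ν) := by
      rw [lintegral_const_mul' _ _ hC, lintegral_add_left (by fun_prop), hγ.lintegral_fst hf,
        hγ.lintegral_snd hg]

end IsCoupling

lemma transportCost_le (h : IsCoupling γ μ ν) : transportCost c μ ν ≤ ∫⁻ z, c z.1 z.2 ∂γ :=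
  iInf₂_le γ h

lemma transportCost_congr_ae {c' : X → Y → ℝ≥0∞} {P : X → Prop} {P' : Y → Prop}
    (hP : ∀ᵐ x ∂μ, P x) (hP' : ∀ᵐ y ∂ν, P' y) (hc : ∀ x y, P x → P' y → c x y = c' x y) :
    transportCost c μ ν = transportCost c' μ ν := by
  refine iInf_congr fun γ => iInf_congr fun h => lintegral_congr_ae ?_
  filter_upwards [h.ae_fst hP, h.ae_snd hP'] with z h₁ h₂ using hc _ _ h₁ h₂

lemma lintegral_le_mul_transportCost_add {f : X → ℝ≥0∞} {g : Y → ℝ≥0∞} (hf : Measurable f)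
    (hg : Measurable g) {C : ℝ≥0∞} (hC₀ : C ≠ 0) (hC : C ≠ ∞)
    (h : ∀ x y, f x ≤ C * (c x y + g y)) :
    ∫⁻ x, f x ∂μ ≤ C * (transportCost c μ ν + ∫⁻ y, g y ∂ν) := by
  simp_rw [transportCost, ENNReal.iInf_add, ENNReal.mul_iInf_of_ne hC₀ hC]
  refine le_iInf₂ fun γ hγ => ?_
  calc ∫⁻ x, f x ∂μ = ∫⁻ z, f z.1 ∂γ := (hγ.lintegral_fst hf).symm
    _ ≤ ∫⁻ z, C * (c z.1 z.2 + g z.2) ∂γ := lintegral_mono fun z => h z.1 z.2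
    _ = C * (∫⁻ z, c z.1 z.2 ∂γ + ∫⁻ y, g y ∂ν) := by
      rw [lintegral_const_mul' _ _ hC, lintegral_add_right _ (by fun_prop),
        hγ.lintegral_snd hg]

/-- A random coupling of random marginals, seen as a coupling of the laws of the marginals. -/
lemma transportCost_transportCost_map_le (c : X → Y → ℝ≥0∞) (Q : Measure (Measure (X × Y))) :
    transportCost (transportCost c) (Q.map fun γ => γ.map Prod.fst) (Q.map fun γ => γ.map Prod.snd)
      ≤ ∫⁻ γ, ∫⁻ z, c z.1 z.2 ∂γ ∂Q := by
  have h₁ : Measurable fun γ : Measure (X × Y) => γ.map Prod.fst :=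
    Measure.measurable_map _ measurable_fst
  have h₂ : Measurable fun γ : Measure (X × Y) => γ.map Prod.snd :=
    Measure.measurable_map _ measurable_snd
  have hQ : IsCoupling (Q.map fun γ => (γ.map Prod.fst, γ.map Prod.snd))
      (Q.map fun γ => γ.map Prod.fst) (Q.map fun γ => γ.map Prod.snd) :=
    ⟨Measure.map_map measurable_fst (h₁.prodMk h₂), Measure.map_map measurable_snd (h₁.prodMk h₂)⟩
  calc transportCost (transportCost c) _ _
      ≤ ∫⁻ z, transportCost c z.1 z.2 ∂(Q.map fun γ => (γ.map Prod.fst, γ.map Prod.snd)) :=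
        transportCost_le hQ
    _ ≤ ∫⁻ γ, transportCost c (γ.map Prod.fst) (γ.map Prod.snd) ∂Q := lintegral_map_le _ _
    _ ≤ ∫⁻ γ, ∫⁻ z, c z.1 z.2 ∂γ ∂Q := lintegral_mono fun γ => transportCost_le ⟨rfl, rfl⟩

end Coupling

section WassW

variable {X : Type*} [MeasurableSpace X] {c : X → X → ℝ} {p : ℝ} {μ ν : Measure X}
  {γ : Measure (X × X)}

lemma wassW_nonneg (hc : ∀ x y, 0 ≤ c x y) : 0 ≤ wassW c p μ ν := by
  refine Real.sInf_nonneg ?_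
  rintro _ ⟨γ, -, -, rfl⟩
  exact Real.rpow_nonneg (integral_nonneg fun z => Real.rpow_nonneg (hc _ _) p) _

lemma wassW_le (hc : ∀ x y, 0 ≤ c x y) (h : IsCoupling γ μ ν) :
    wassW c p μ ν ≤ (∫ z, c z.1 z.2 ^ p ∂γ) ^ (1 / p) := by
  refine csInf_le ⟨0, ?_⟩ ⟨γ, h.map_fst, h.map_snd, rfl⟩
  rintro _ ⟨γ', -, -, rfl⟩
  exact Real.rpow_nonneg (integral_nonneg fun z => Real.rpow_nonneg (hc _ _) p) _

lemma ofReal_wassW_rpow_le_transportCost (hc : ∀ x y, 0 ≤ c x y) (hp : 0 < p) :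
    ENNReal.ofReal (wassW c p μ ν ^ p) ≤
      transportCost (fun x y => ENNReal.ofReal (c x y ^ p)) μ ν := by
  refine le_iInf₂ fun γ h => ?_
  have hcp : ∀ z : X × X, 0 ≤ c z.1 z.2 ^ p := fun z => Real.rpow_nonneg (hc _ _) p
  calc ENNReal.ofReal (wassW c p μ ν ^ p) ≤ ENNReal.ofReal (∫ z, c z.1 z.2 ^ p ∂γ) := by
        refine ENNReal.ofReal_le_ofReal ((Real.le_rpow_inv_iff_of_pos (wassW_nonneg hc)
          (integral_nonneg hcp) hp).1 ?_)
        simpa only [one_div] using wassW_le hc h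
    _ = ‖∫ z, c z.1 z.2 ^ p ∂γ‖ₑ := (Real.enorm_of_nonneg (integral_nonneg hcp)).symm
    _ ≤ ∫⁻ z, ‖c z.1 z.2 ^ p‖ₑ ∂γ := enorm_integral_le_lintegral_enorm _
    _ = ∫⁻ z, ENNReal.ofReal (c z.1 z.2 ^ p) ∂γ :=
      lintegral_congr fun z => Real.enorm_of_nonneg (hcp z)

lemma ofReal_wassW_rpow_eq_transportCost (hc : ∀ x y, 0 ≤ c x y) (hp : 0 < p)
    (hγ : IsCoupling γ μ ν)
    (hint : ∀ γ, IsCoupling γ μ ν → Integrable (fun z : X × X => c z.1 z.2 ^ p) γ) :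
    ENNReal.ofReal (wassW c p μ ν ^ p) =
      transportCost (fun x y => ENNReal.ofReal (c x y ^ p)) μ ν := by
  refine (ofReal_wassW_rpow_le_transportCost hc hp).antisymm ?_
  set T := transportCost (fun x y => ENNReal.ofReal (c x y ^ p)) μ ν
  have hT : ∀ γ, IsCoupling γ μ ν → T ≤ ENNReal.ofReal (∫ z, c z.1 z.2 ^ p ∂γ) := fun γ h =>
    (transportCost_le h).trans_eq (ofReal_integral_eq_lintegral_ofReal (hint γ h)
      (ae_of_all _ fun z => Real.rpow_nonneg (hc _ _) p)).symm
  have hT_top : T ≠ ∞ := ((hT γ hγ).trans_lt ENNReal.ofReal_lt_top).ne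
  have hTW : T.toReal ^ p⁻¹ ≤ wassW c p μ ν := by
    refine le_csInf ⟨_, γ, hγ.map_fst, hγ.map_snd, rfl⟩ ?_
    rintro _ ⟨γ', h₁, h₂, rfl⟩
    rw [one_div]
    exact Real.rpow_le_rpow ENNReal.toReal_nonneg (ENNReal.toReal_le_of_le_ofReal
      (integral_nonneg fun z => Real.rpow_nonneg (hc _ _) p) (hT γ' ⟨h₁, h₂⟩)) (by positivity)
  rw [ENNReal.le_ofReal_iff_toReal_le hT_top (Real.rpow_nonneg (wassW_nonneg hc) p)]
  exact (Real.rpow_inv_le_iff_of_pos ENNReal.toReal_nonneg (wassW_nonneg hc) hp).1 hTW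

/-- When the transport cost is infinite, every coupling has a non-integrable cost, so that both
sides are `0`. -/
lemma wassW_le_toReal_transportCost_rpow (hc : ∀ x y, 0 ≤ c x y) (hp : 0 < p)
    (hγ : IsCoupling γ μ ν) :
    wassW c p μ ν ≤
      (transportCost (fun x y => ENNReal.ofReal (c x y ^ p)) μ ν).toReal ^ (1 / p) := by
  set T := transportCost (fun x y => ENNReal.ofReal (c x y ^ p)) μ ν
  by_cases hT : T = ∞
  · have hni : ¬ Integrable (fun z : X × X => c z.1 z.2 ^ p) γ := fun hint =>
      (transportCost_le hγ).not_gt (hT ▸ hint.lintegral_lt_top)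
    simpa [integral_undef hni, hT] using wassW_le (p := p) hc hγ
  · rw [one_div, Real.le_rpow_inv_iff_of_pos (wassW_nonneg hc) ENNReal.toReal_nonneg hp,
      ← ENNReal.ofReal_le_iff_le_toReal hT]
    exact ofReal_wassW_rpow_le_transportCost hc hp

lemma wassW_dirac_right [IsProbabilityMeasure μ] {y : X} (hy : MeasurableSet {y})
    (hc : AEStronglyMeasurable (fun x => c x y ^ p) μ) :
    wassW c p μ (Measure.dirac y) = (∫ x, c x y ^ p ∂μ) ^ (1 / p) := by
  have hcost : ∀ γ, IsCoupling γ μ (Measure.dirac y) →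
      ∫ z, c z.1 z.2 ^ p ∂γ = ∫ x, c x y ^ p ∂μ := fun γ h => by
    have hsnd : ∀ᵐ z ∂γ, z.2 = y := h.ae_snd ((ae_dirac_iff hy).2 rfl)
    calc ∫ z, c z.1 z.2 ^ p ∂γ = ∫ z, c z.1 y ^ p ∂γ :=
          integral_congr_ae (hsnd.mono fun z hz => by simp only [hz])
      _ = ∫ x, c x y ^ p ∂(γ.map Prod.fst) :=
        (integral_map measurable_fst.aemeasurable (h.map_fst ▸ hc)).symm
      _ = ∫ x, c x y ^ p ∂μ := by rw [h.map_fst]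
  have hset : {r : ℝ | ∃ γ : Measure (X × X), γ.map Prod.fst = μ ∧
      γ.map Prod.snd = Measure.dirac y ∧ r = (∫ z, c z.1 z.2 ^ p ∂γ) ^ (1 / p)} =
      {(∫ x, c x y ^ p ∂μ) ^ (1 / p)} := by
    ext r
    constructor
    · rintro ⟨γ, h₁, h₂, rfl⟩
      exact congrArg (· ^ (1 / p)) (hcost γ ⟨h₁, h₂⟩)
    · rintro rfl
      have h := isCoupling_prod μ (Measure.dirac y)
      exact ⟨_, h.map_fst, h.map_snd, congrArg (· ^ (1 / p)) (hcost _ h).symm⟩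
  rw [wassW, hset, csInf_singleton]

end WassW

lemma measurableSet_singleton_of_isFiniteMeasure {X : Type*} [mX : MeasurableSpace X]
    [MeasurableSpace.CountablyGenerated X] (μ : Measure X) [IsFiniteMeasure μ] :
    MeasurableSet {μ} := by
  obtain ⟨b, hb, hgen⟩ := MeasurableSpace.CountablyGenerated.isCountablyGenerated (α := X)
  set C := generateSetAlgebra b
  have hC : mX = MeasurableSpace.generateFrom C := by
    rw [hgen, generateFrom_generateSetAlgebra_eq]
  have hC_meas : ∀ s ∈ C, MeasurableSet s := fun s hs =>
    hC ▸ MeasurableSpace.measurableSet_generateFrom hs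
  have hC_alg : IsSetAlgebra C := isSetAlgebra_generateSetAlgebra
  have hμ : {μ} = ⋂ s ∈ C, {ν : Measure X | ν s = μ s} := by
    ext ν
    simp only [Set.mem_singleton_iff, Set.mem_iInter, Set.mem_ofPred_eq]
    refine ⟨fun h s _ => by rw [h], fun h => Eq.symm ?_⟩
    exact ext_of_generate_finite C hC (fun s hs t ht _ => hC_alg.inter_mem hs ht)
      (fun s hs => (h s hs).symm) (h _ hC_alg.univ_mem).symm
  rw [hμ]
  exact .biInter (countable_generateSetAlgebra hb) fun s hs =>
    measurableSet_eq_fun (Measure.measurable_coe (hC_meas s hs)) measurable_const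

section Moment

variable {S : Type*} {p : ℝ}

/-- The `p`-th moment of `μ` about `x₀`. -/
def emoment [MeasurableSpace S] [PseudoEMetricSpace S] (p : ℝ) (x₀ : S) (μ : Measure S) : ℝ≥0∞ :=
  ∫⁻ x, edist x x₀ ^ p ∂μ

/-- The `p`-th power of the `p`-Wasserstein distance, as an optimal transport cost. -/
def wassCost [MeasurableSpace S] [PseudoEMetricSpace S] (p : ℝ) : Measure S → Measure S → ℝ≥0∞ :=
  transportCost fun x y => edist x y ^ p

lemma two_rpow_ne_top (r : ℝ) : (2 : ℝ≥0∞) ^ r ≠ ∞ :=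
  ENNReal.rpow_ne_top_of_ne_zero two_ne_zero ENNReal.ofNat_ne_top

lemma edist_rpow_le [PseudoEMetricSpace S] (hp : 1 ≤ p) (x y z : S) :
    edist x z ^ p ≤ 2 ^ (p - 1) * (edist x y ^ p + edist y z ^ p) :=
  (ENNReal.rpow_le_rpow (edist_triangle x y z) (zero_le_one.trans hp)).trans
    (ENNReal.rpow_add_le_mul_rpow_add_rpow _ _ hp)

lemma ofReal_dist_rpow [PseudoMetricSpace S] (hp : 0 ≤ p) (x y : S) :
    ENNReal.ofReal (dist x y ^ p) = edist x y ^ p := by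
  rw [edist_dist, ENNReal.ofReal_rpow_of_nonneg dist_nonneg hp]

lemma emoment_le_emoment_add [MeasurableSpace S] [PseudoEMetricSpace S] {μ : Measure S}
    [IsProbabilityMeasure μ] (hp : 1 ≤ p) (x₀ y : S) :
    emoment p y μ ≤ 2 ^ (p - 1) * (emoment p x₀ μ + edist x₀ y ^ p) := by
  calc emoment p y μ ≤ ∫⁻ x, 2 ^ (p - 1) * (edist x x₀ ^ p + edist x₀ y ^ p) ∂μ :=
        lintegral_mono fun x => edist_rpow_le hp x x₀ y
    _ = 2 ^ (p - 1) * (emoment p x₀ μ + edist x₀ y ^ p) := by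
      rw [lintegral_const_mul' _ _ (two_rpow_ne_top _), lintegral_add_right _ measurable_const]
      simp [emoment]

section PseudoEMetric

variable [MeasurableSpace S] [PseudoEMetricSpace S] [OpensMeasurableSpace S] {μ ν : Measure S}

@[fun_prop]
lemma measurable_edist_rpow_const (p : ℝ) (x₀ : S) : Measurable fun x => edist x x₀ ^ p :=
  measurable_edist_left.pow_const p

lemma measurable_emoment (p : ℝ) (x₀ : S) : Measurable (emoment p x₀) :=
  Measure.measurable_lintegral (measurable_edist_rpow_const p x₀)

lemma emoment_le_wassCost_add (hp : 1 ≤ p) (x₀ : S) :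
    emoment p x₀ μ ≤ 2 ^ (p - 1) * (wassCost p μ ν + emoment p x₀ ν) :=
  lintegral_le_mul_transportCost_add (by fun_prop) (by fun_prop)
    (ENNReal.rpow_pos two_pos ENNReal.ofNat_ne_top).ne' (two_rpow_ne_top _)
    fun x y => edist_rpow_le hp x y x₀

lemma IsCoupling.lintegral_edist_rpow_le {γ : Measure (S × S)} (hγ : IsCoupling γ μ ν)
    (hp : 1 ≤ p) (x₀ : S) :
    ∫⁻ z, edist z.1 z.2 ^ p ∂γ ≤ 2 ^ (p - 1) * (emoment p x₀ μ + emoment p x₀ ν) := by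
  refine hγ.lintegral_le_mul_add (c := fun x y => edist x y ^ p) (by fun_prop) (by fun_prop)
    (two_rpow_ne_top _) fun x y => ?_
  simpa only [edist_comm x₀ y] using edist_rpow_le hp x x₀ y

end PseudoEMetric

lemma MemWp.nonempty [MeasurableSpace S] [MetricSpace S] {μ : Measure S} (h : MemWp p μ) :
    Nonempty S :=
  ⟨h.2.choose⟩

section MemWp

variable [MeasurableSpace S] [MetricSpace S] [OpensMeasurableSpace S] {μ ν : Measure S}

lemma memWp_iff (hp : 1 ≤ p) (x₀ : S) :
    MemWp p μ ↔ IsProbabilityMeasure μ ∧ emoment p x₀ μ ≠ ∞ := by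
  have hp₀ : 0 ≤ p := zero_le_one.trans hp
  have integrable_iff : ∀ y : S, Integrable (fun x => dist x y ^ p) μ ↔ emoment p y μ ≠ ∞ := by
    intro y
    have hmeas : AEStronglyMeasurable (fun x => dist x y ^ p) μ :=
      (((continuous_id.dist continuous_const).measurable).pow_const p).aestronglyMeasurable
    rw [Integrable, and_iff_right hmeas, hasFiniteIntegral_iff_ofReal
      (ae_of_all _ fun x => Real.rpow_nonneg dist_nonneg p), lt_top_iff_ne_top, emoment]
    simp_rw [ofReal_dist_rpow hp₀]
  refine and_congr_right fun hμ => ⟨fun ⟨y, hy⟩ => ?_, fun h => ⟨x₀, (integrable_iff x₀).2 h⟩⟩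
  refine ((emoment_le_emoment_add hp y x₀).trans_lt ?_).ne
  exact ENNReal.mul_lt_top (two_rpow_ne_top _).lt_top (ENNReal.add_lt_top.2
    ⟨((integrable_iff y).1 hy).lt_top, ENNReal.rpow_lt_top_of_nonneg hp₀ (edist_ne_top _ _)⟩)

lemma MemWp.emoment_ne_top (h : MemWp p μ) (hp : 1 ≤ p) (x₀ : S) : emoment p x₀ μ ≠ ∞ :=
  ((memWp_iff hp x₀).1 h).2

lemma IsCoupling.lintegral_edist_rpow_ne_top {γ : Measure (S × S)} (hγ : IsCoupling γ μ ν)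
    (hμ : MemWp p μ) (hν : MemWp p ν) (hp : 1 ≤ p) : ∫⁻ z, edist z.1 z.2 ^ p ∂γ ≠ ∞ := by
  obtain ⟨x₀⟩ := hμ.nonempty
  refine ((hγ.lintegral_edist_rpow_le hp x₀).trans_lt ?_).ne
  exact ENNReal.mul_lt_top (two_rpow_ne_top _).lt_top (ENNReal.add_lt_top.2
    ⟨(hμ.emoment_ne_top hp x₀).lt_top, (hν.emoment_ne_top hp x₀).lt_top⟩)

lemma MemWp.wassCost_ne_top (hμ : MemWp p μ) (hν : MemWp p ν) (hp : 1 ≤ p) :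
    wassCost p μ ν ≠ ∞ := by
  have := hμ.1
  have := hν.1
  have hγ := isCoupling_prod μ ν
  exact ne_top_of_le_ne_top (hγ.lintegral_edist_rpow_ne_top hμ hν hp) (transportCost_le hγ)

lemma measurableSet_memWp (hp : 1 ≤ p) : MeasurableSet {μ : Measure S | MemWp p μ} := by
  cases isEmpty_or_nonempty S
  · convert MeasurableSet.empty using 1
    exact Set.eq_empty_of_forall_notMem fun μ h => not_nonempty_iff.2 ‹_› h.nonempty
  · obtain ⟨x₀⟩ := ‹Nonempty S›
    simp_rw [memWp_iff hp x₀, isProbabilityMeasure_iff]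
    exact (measurableSet_eq_fun (Measure.measurable_coe .univ) measurable_const).inter
      (measurable_emoment p x₀ (measurableSet_singleton ∞).compl)

lemma ofReal_wassW_dist_rpow [SecondCountableTopology S] (hμ : MemWp p μ) (hν : MemWp p ν)
    (hp : 1 ≤ p) : ENNReal.ofReal (wassW (fun u v => dist u v) p μ ν ^ p) = wassCost p μ ν := by
  have := hμ.1
  have := hν.1
  have hp₀ : 0 < p := zero_lt_one.trans_le hp
  rw [wassCost, ofReal_wassW_rpow_eq_transportCost (fun _ _ => dist_nonneg) hp₀
    (isCoupling_prod μ ν)]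
  · simp_rw [ofReal_dist_rpow hp₀.le]
  · intro γ hγ
    refine ⟨(measurable_dist.pow_const p).aestronglyMeasurable, ?_⟩
    rw [hasFiniteIntegral_iff_ofReal (ae_of_all _ fun z => Real.rpow_nonneg dist_nonneg p)]
    simp_rw [ofReal_dist_rpow hp₀.le]
    exact (hγ.lintegral_edist_rpow_ne_top hμ hν hp).lt_top

end MemWp

end Moment

section Rebalance

lemma exists_one_sub_mul_le {C ε : ℝ≥0∞} (hC : C ≠ ∞) (hε : ε ≠ 0) :
    ∃ t < 1, (1 - t) * C ≤ ε := by
  refine ⟨1 - ε / C, ENNReal.sub_lt_self ENNReal.one_ne_top one_ne_zero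
    (ENNReal.div_ne_zero.2 ⟨hε, hC⟩), ?_⟩
  rw [mul_comm]
  exact (mul_le_mul_right tsub_tsub_le C).trans ENNReal.mul_div_le

lemma exists_seq_forall_le_mul {X ι : Type*} [Nonempty X] [Finite ι] {f : X → ι → ℝ≥0∞}
    (hf : ∀ x i, f x i ≠ ∞) :
    ∃ s : ℕ → X, ∀ x, ∀ C > 1, ∃ k, ∀ i, f (s k) i ≤ C * f x i := by
  let bound : (ι → ℚ) → ι → ℝ≥0∞ := fun q i => ENNReal.ofReal (q i)
  choose! pick hpick using fun (q : ι → ℚ) (h : ∃ x, ∀ i, f x i ≤ bound q i) => h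
  obtain ⟨enum, henum⟩ := exists_surjective_nat (ι → ℚ)
  refine ⟨pick ∘ enum, fun x C hC => ?_⟩
  have hq : ∀ i, ∃ q : ℚ, f x i ≤ ENNReal.ofReal q ∧ ENNReal.ofReal q ≤ C * f x i := fun i => by
    rcases eq_or_ne (f x i) 0 with h₀ | h₀
    · exact ⟨0, by simp [h₀]⟩
    · have hlt : f x i < C * f x i := by
        simpa only [one_mul] using ENNReal.mul_lt_mul_left h₀ (hf x i) hC
      obtain ⟨q, -, hq₁, hq₂⟩ := ENNReal.lt_iff_exists_rat_btwn.1 hlt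
      exact ⟨q, hq₁.le, hq₂.le⟩
  choose q hq₁ hq₂ using hq
  obtain ⟨k, rfl⟩ := henum q
  exact ⟨k, fun i => (hpick _ ⟨x, hq₁⟩ i).trans (hq₂ i)⟩

variable {T ι : Type*} [MeasurableSpace T] [Fintype ι] {p₀ : Measure T}

/-- A splitting enters the estimates only through finitely many numbers, its masses and its total
cost, so countably many splittings suffice up to a factor `C`. -/
lemma exists_seq_splitting [IsProbabilityMeasure p₀] [Nonempty ι] {c : ι → T → ℝ≥0∞}
    (hc : ∀ i, ∫⁻ y, c i y ∂p₀ ≠ ∞) :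
    ∃ ν : ℕ → ι → Measure T, (∀ k, ∑ i, ν k i = p₀) ∧
      ∀ ν' : ι → Measure T, ∑ i, ν' i = p₀ → ∀ C > 1, ∃ k,
        (∀ i, ν k i Set.univ ≤ C * ν' i Set.univ) ∧
        ∑ i, ∫⁻ y, c i y ∂ν k i ≤ C * ∑ i, ∫⁻ y, c i y ∂ν' i := by
  classical
  let X := {ν : ι → Measure T // ∑ i, ν i = p₀}
  let f : X → Option ι → ℝ≥0∞ := fun ν o =>
    o.elim (∑ i, ∫⁻ y, c i y ∂ν.1 i) fun i => ν.1 i Set.univ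
  have hle : ∀ (ν : X) i, ν.1 i ≤ p₀ := fun ν i =>
    (Finset.single_le_sum (fun _ _ => Measure.zero_le _) (Finset.mem_univ i)).trans_eq ν.2
  have hf : ∀ ν o, f ν o ≠ ∞ := by
    rintro ν (_ | i)
    · exact ENNReal.sum_ne_top.2 fun i _ =>
        ne_top_of_le_ne_top (hc i) (lintegral_mono' (hle ν i) le_rfl)
    · exact ne_top_of_le_ne_top (measure_ne_top p₀ Set.univ) (hle ν i Set.univ)
  have : Nonempty X := ‹Nonempty ι›.map fun i => ⟨Pi.single i p₀, by simp⟩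
  obtain ⟨s, hs⟩ := exists_seq_forall_le_mul hf
  refine ⟨fun k => (s k).1, fun k => (s k).2, fun ν' hν' C hC => ?_⟩
  obtain ⟨k, hk⟩ := hs ⟨ν', hν'⟩ C hC
  exact ⟨k, fun i => hk (some i), hk none⟩

/-- Given a splitting `ν` of `p₀` and weights `a`, the conditional laws of a splitting of `p₀` with
the prescribed masses `a`: if `t • ν i` has mass at most `a i` for all `i`, the missing mass is
filled in with copies of `p₀`. The default value `p₀` makes it a probability measure in all
cases. -/
def rebalance (p₀ : Measure T) (ν : ι → Measure T) (t : ℝ≥0∞) (a : ι → ℝ≥0∞) (i : ι) :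
    Measure T :=
  open Classical in
  if ∀ j, t * ν j Set.univ ≤ a j then
    (t * (a i)⁻¹) • ν i + (1 - t * (a i)⁻¹ * ν i Set.univ) • p₀
  else p₀

variable {ν : ι → Measure T} {t : ℝ≥0∞} {a : ι → ℝ≥0∞}

lemma measurable_rebalance {Ω : Type*} [MeasurableSpace Ω] {a : Ω → ι → ℝ≥0∞} (ha : Measurable a)
    (i : ι) : Measurable fun ω => rebalance p₀ ν t (a ω) i := by
  have hai : ∀ j, Measurable fun ω => a ω j := fun j => (measurable_pi_apply j).comp ha
  refine Measurable.ite ?_ (by fun_prop) measurable_const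
  simp only [Set.ofPred_forall]
  exact .iInter fun j => measurableSet_le measurable_const (hai j)

lemma smul_rebalance (h : ∀ j, t * ν j Set.univ ≤ a j) {i : ι} (hi : a i ≠ ∞) :
    a i • rebalance p₀ ν t a i = t • ν i + (a i - t * ν i Set.univ) • p₀ := by
  rcases eq_or_ne (a i) 0 with hi₀ | hi₀
  · have ht : t • ν i = 0 := by
      rw [← Measure.measure_univ_eq_zero]
      simpa [hi₀] using h i
    simp [hi₀, ht]
  · have hta : a i * (t * (a i)⁻¹) = t := by
      rw [mul_left_comm, ENNReal.mul_inv_cancel hi₀ hi, mul_one]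
    rw [rebalance, if_pos h, smul_add, smul_smul, smul_smul, ENNReal.mul_sub fun _ _ => hi, hta,
      mul_one, ← mul_assoc (a i) _ (ν i Set.univ), hta]

variable [IsProbabilityMeasure p₀]

instance (i : ι) : IsProbabilityMeasure (rebalance p₀ ν t a i) := by
  rw [rebalance]
  split_ifs with h
  · have hle : t * (a i)⁻¹ * ν i Set.univ ≤ 1 := by
      calc t * (a i)⁻¹ * ν i Set.univ = t * ν i Set.univ * (a i)⁻¹ := by ring
        _ ≤ a i * (a i)⁻¹ := by gcongr; exact h i
        _ ≤ 1 := ENNReal.mul_inv_le_one _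
    exact ⟨by simp [add_tsub_cancel_of_le hle]⟩
  · infer_instance

lemma sum_sub_mul_add (hν : ∑ i, ν i = p₀) (ha : ∑ i, a i = 1)
    (h : ∀ j, t * ν j Set.univ ≤ a j) : ∑ i, (a i - t * ν i Set.univ) + t = 1 := by
  have hmass : ∑ i, ν i Set.univ = 1 := by
    rw [← Measure.finsetSum_apply, hν, measure_univ]
  calc ∑ i, (a i - t * ν i Set.univ) + t
      = ∑ i, (a i - t * ν i Set.univ + t * ν i Set.univ) := by
        rw [Finset.sum_add_distrib, ← Finset.mul_sum, hmass, mul_one]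
    _ = 1 := by simp_rw [tsub_add_cancel_of_le (h _), ha]

lemma sum_smul_rebalance (hν : ∑ i, ν i = p₀) (ha : ∑ i, a i = 1) :
    ∑ i, a i • rebalance p₀ ν t a i = p₀ := by
  have ha_top : ∀ i, a i ≠ ∞ := fun i => ENNReal.sum_ne_top.1 (ha ▸ ENNReal.one_ne_top) i
    (Finset.mem_univ i)
  by_cases h : ∀ j, t * ν j Set.univ ≤ a j
  · simp_rw [smul_rebalance h (ha_top _)]
    rw [Finset.sum_add_distrib, ← Finset.smul_sum, hν, ← Finset.sum_smul, ← add_smul, add_comm t,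
      sum_sub_mul_add hν ha h, one_smul]
  · simp_rw [rebalance, if_neg h, ← Finset.sum_smul, ha, one_smul]

lemma sum_mul_lintegral_rebalance_le (hν : ∑ i, ν i = p₀) (ha : ∑ i, a i = 1) (ht : t ≠ ∞)
    (h : ∀ j, t * ν j Set.univ ≤ a j) (c : ι → T → ℝ≥0∞) :
    ∑ i, a i * ∫⁻ y, c i y ∂rebalance p₀ ν t a i ≤
      t * ∑ i, ∫⁻ y, c i y ∂ν i + (1 - t) * ∑ i, ∫⁻ y, c i y ∂p₀ := by
  have ha_top : ∀ i, a i ≠ ∞ := fun i => ENNReal.sum_ne_top.1 (ha ▸ ENNReal.one_ne_top) i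
    (Finset.mem_univ i)
  rw [Finset.mul_sum, Finset.mul_sum, ← Finset.sum_add_distrib]
  refine Finset.sum_le_sum fun i _ => ?_
  have hi : a i - t * ν i Set.univ ≤ 1 - t := by
    refine ENNReal.le_sub_of_add_le_right ht ((add_le_add_left ?_ t).trans_eq
      (sum_sub_mul_add hν ha h))
    exact Finset.single_le_sum (f := fun i => a i - t * ν i Set.univ) (fun _ _ => zero_le)
      (Finset.mem_univ i)
  rw [← smul_eq_mul, ← lintegral_smul_measure, smul_rebalance h (ha_top i), lintegral_add_measure,
    lintegral_smul_measure, lintegral_smul_measure, smul_eq_mul, smul_eq_mul]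
  gcongr

end Rebalance

section Label

variable {Ω S T ι : Type*} [MeasurableSpace Ω] [MeasurableSpace S] [MeasurableSpace T]
  [MeasurableSpace ι] {τ : S → ι}

/-- The kernel which samples `x` from `κ ω` and then `y` from a law depending on `x` only through
the finitely-valued label `τ x`. -/
def labelCompProd (κ : Kernel Ω S) (hτ : Measurable τ) (w : Kernel (Ω × ι) T) :
    Kernel Ω (S × T) :=
  κ ⊗ₖ w.comap (fun z => (z.1, τ z.2)) (measurable_fst.prodMk (hτ.comp measurable_snd))

/-- The splitting of the second marginal of `γ` according to the label `τ` of the first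
coordinate. -/
def labelSplitting (γ : Measure (S × T)) (τ : S → ι) (i : ι) : Measure T :=
  (γ.restrict ((τ ∘ Prod.fst) ⁻¹' {i})).map Prod.snd

variable [MeasurableSingletonClass ι]

lemma labelSplitting_univ (γ : Measure (S × T)) (hτ : Measurable τ) (i : ι) :
    labelSplitting γ τ i Set.univ = γ.map Prod.fst (τ ⁻¹' {i}) := by
  have hi := hτ (measurableSet_singleton i)
  rw [labelSplitting, Measure.map_apply measurable_snd .univ, Set.preimage_univ,
    Measure.restrict_apply_univ, Measure.map_apply measurable_fst hi, Set.preimage_comp]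

variable [Fintype ι]

lemma lintegral_labelCompProd (κ : Kernel Ω S) [IsSFiniteKernel κ] (hτ : Measurable τ)
    (w : Kernel (Ω × ι) T) [IsSFiniteKernel w] {c : ι → T → ℝ≥0∞} (hc : ∀ i, Measurable (c i))
    (ω : Ω) :
    ∫⁻ z, c (τ z.1) z.2 ∂labelCompProd κ hτ w ω =
      ∑ i, κ ω (τ ⁻¹' {i}) * ∫⁻ y, c i y ∂w (ω, i) := by
  have hc' : Measurable fun z : ι × T => c z.1 z.2 := measurable_from_prod_countable_right hc
  have hcτ : Measurable fun z : S × T => c (τ z.1) z.2 :=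
    hc'.comp ((hτ.comp measurable_fst).prodMk measurable_snd)
  rw [labelCompProd, Kernel.lintegral_compProd _ _ _ hcτ]
  simp_rw [Kernel.comap_apply]
  rw [← lintegral_map (f := fun i => ∫⁻ y, c i y ∂w (ω, i)) .of_discrete hτ, lintegral_fintype]
  simp_rw [Measure.map_apply hτ (measurableSet_singleton _), mul_comm]

lemma isCoupling_labelCompProd (κ : Kernel Ω S) [IsSFiniteKernel κ] (hτ : Measurable τ)
    (w : Kernel (Ω × ι) T) [IsMarkovKernel w] (ω : Ω) :
    IsCoupling (labelCompProd κ hτ w ω) (κ ω) (∑ i, κ ω (τ ⁻¹' {i}) • w (ω, i)) where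
  map_fst := by rw [← Kernel.fst_apply, labelCompProd, Kernel.fst_compProd]
  map_snd := by
    ext B hB
    rw [← lintegral_indicator_one (μ := Measure.map _ _) hB,
      lintegral_map (measurable_one.indicator hB) measurable_snd,
      lintegral_labelCompProd κ hτ w (c := fun _ => B.indicator 1)
        fun _ => measurable_one.indicator hB]
    simp [lintegral_indicator_one hB]

lemma sum_restrict_preimage_singleton {Z : Type*} [MeasurableSpace Z] (γ : Measure Z) {g : Z → ι}
    (hg : Measurable g) : ∑ i, γ.restrict (g ⁻¹' {i}) = γ := by
  rw [← Measure.sum_fintype, ← Measure.restrict_iUnion (pairwise_disjoint_fiber g)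
    fun i => hg (measurableSet_singleton i), ← Set.preimage_iUnion, Set.iUnion_of_singleton,
    Set.preimage_univ, Measure.restrict_univ]

lemma sum_labelSplitting (γ : Measure (S × T)) (hτ : Measurable τ) :
    ∑ i, labelSplitting γ τ i = γ.map Prod.snd := by
  simp_rw [labelSplitting, ← Measure.mapₗ_apply_of_measurable measurable_snd]
  rw [← map_sum, sum_restrict_preimage_singleton γ (hτ.comp measurable_fst)]

lemma sum_lintegral_labelSplitting (γ : Measure (S × T)) (hτ : Measurable τ) {c : ι → T → ℝ≥0∞}
    (hc : ∀ i, Measurable (c i)) :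
    ∑ i, ∫⁻ y, c i y ∂labelSplitting γ τ i = ∫⁻ z, c (τ z.1) z.2 ∂γ := by
  have hτ' : Measurable (τ ∘ (Prod.fst : S × T → S)) := hτ.comp measurable_fst
  calc ∑ i, ∫⁻ y, c i y ∂labelSplitting γ τ i
      = ∑ i, ∫⁻ z in (τ ∘ Prod.fst) ⁻¹' {i}, c (τ z.1) z.2 ∂γ := by
        refine Finset.sum_congr rfl fun i _ => ?_
        rw [labelSplitting, lintegral_map (hc i) measurable_snd]
        refine setLIntegral_congr_fun (hτ' (measurableSet_singleton i)) fun z hz => ?_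
        rw [show τ z.1 = i from hz]
    _ = ∫⁻ z, c (τ z.1) z.2 ∂γ := by
      rw [← lintegral_finsetSum_measure, sum_restrict_preimage_singleton γ hτ']

end Label

theorem exists_seq_kernel_isCoupling_lintegral_label_le {Ω S T ι : Type*} [MeasurableSpace Ω]
    [MeasurableSpace S] [MeasurableSpace T] [Finite ι] [Nonempty ι] [MeasurableSpace ι]
    [MeasurableSingletonClass ι] (κ : Kernel Ω S) [IsMarkovKernel κ] (p₀ : Measure T)
    [IsProbabilityMeasure p₀] {τ : S → ι} (hτ : Measurable τ) {c : ι → T → ℝ≥0∞}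
    (hc : ∀ i, Measurable (c i)) (hc₀ : ∀ i, ∫⁻ y, c i y ∂p₀ ≠ ∞) {ε : ℝ≥0∞} (hε : ε ≠ 0) :
    ∃ K : ℕ → Kernel Ω (S × T), (∀ k ω, IsCoupling (K k ω) (κ ω) p₀) ∧
      ∀ ω γ, IsCoupling γ (κ ω) p₀ →
        ∃ k, ∫⁻ z, c (τ z.1) z.2 ∂K k ω ≤ ∫⁻ z, c (τ z.1) z.2 ∂γ + ε := by
  have := Fintype.ofFinite ι
  obtain ⟨t, ht, htε⟩ := exists_one_sub_mul_le (ENNReal.sum_ne_top.2 fun i _ => hc₀ i) hε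
  have ht_cancel : ∀ x, t * (t⁻¹ * x) ≤ x := fun x => by
    rw [← mul_assoc]
    exact mul_le_of_le_one_left' (ENNReal.mul_inv_le_one t)
  obtain ⟨ν, hν, happrox⟩ := exists_seq_splitting hc₀
  let a : Ω → ι → ℝ≥0∞ := fun ω i => κ ω (τ ⁻¹' {i})
  have ha : Measurable a :=
    measurable_pi_lambda _ fun i => κ.measurable_coe (hτ (measurableSet_singleton i))
  have ha_sum : ∀ ω, ∑ i, a ω i = 1 := fun ω => by
    rw [sum_measure_preimage_singleton _ fun i _ => hτ (measurableSet_singleton i)]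
    simp
  let w : ℕ → Kernel (Ω × ι) T := fun k =>
    ⟨fun z => rebalance p₀ (ν k) t (a z.1) z.2,
      measurable_from_prod_countable_left fun i => measurable_rebalance ha i⟩
  have hw : ∀ k, IsMarkovKernel (w k) := fun k =>
    ⟨fun z => inferInstanceAs (IsProbabilityMeasure (rebalance p₀ (ν k) t (a z.1) z.2))⟩
  refine ⟨fun k => labelCompProd κ hτ (w k), fun k ω => ?_, fun ω γ hγ => ?_⟩
  · convert isCoupling_labelCompProd κ hτ (w k) ω
    exact (sum_smul_rebalance (hν k) (ha_sum ω)).symm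
  · obtain ⟨k, hmass, hcost⟩ := happrox (labelSplitting γ τ)
      ((sum_labelSplitting γ hτ).trans hγ.map_snd) t⁻¹ (ENNReal.one_lt_inv.2 ht)
    have hta : ∀ i, t * ν k i Set.univ ≤ a ω i := fun i => by
      refine (mul_le_mul_right (hmass i) t).trans ((ht_cancel _).trans_eq ?_)
      rw [labelSplitting_univ γ hτ, hγ.map_fst]
    refine ⟨k, ?_⟩
    calc ∫⁻ z, c (τ z.1) z.2 ∂labelCompProd κ hτ (w k) ω
        = ∑ i, a ω i * ∫⁻ y, c i y ∂rebalance p₀ (ν k) t (a ω) i :=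
          lintegral_labelCompProd κ hτ (w k) hc ω
      _ ≤ t * ∑ i, ∫⁻ y, c i y ∂ν k i + (1 - t) * ∑ i, ∫⁻ y, c i y ∂p₀ :=
        sum_mul_lintegral_rebalance_le (hν k) (ha_sum ω) ht.ne_top hta c
      _ ≤ ∑ i, ∫⁻ y, c i y ∂labelSplitting γ τ i + ε :=
        add_le_add ((mul_le_mul_right hcost t).trans (ht_cancel _)) htε
      _ = ∫⁻ z, c (τ z.1) z.2 ∂γ + ε := by rw [sum_lintegral_labelSplitting γ hτ hc]

section Selection

open Filter Topology

variable {S : Type*} [MeasurableSpace S] {p : ℝ}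

section PseudoEMetric

variable [PseudoEMetricSpace S] [OpensMeasurableSpace S] [SecondCountableTopology S]

lemma lintegral_edist_rpow_triangle {Z : Type*} [MeasurableSpace Z] {μ : Measure Z} {f g h : Z → S}
    (hp : 1 ≤ p) (hf : Measurable f) (hg : Measurable g) (hh : Measurable h) :
    (∫⁻ z, edist (f z) (h z) ^ p ∂μ) ^ (1 / p) ≤
      (∫⁻ z, edist (f z) (g z) ^ p ∂μ) ^ (1 / p) + (∫⁻ z, edist (g z) (h z) ^ p ∂μ) ^ (1 / p) := by
  have hp₀ : 0 ≤ p := zero_le_one.trans hp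
  calc (∫⁻ z, edist (f z) (h z) ^ p ∂μ) ^ (1 / p)
      ≤ (∫⁻ z, (edist (f z) (g z) + edist (g z) (h z)) ^ p ∂μ) ^ (1 / p) :=
        ENNReal.rpow_le_rpow (lintegral_mono fun z =>
          ENNReal.rpow_le_rpow (edist_triangle _ _ _) hp₀) (one_div_nonneg.2 hp₀)
    _ ≤ _ := ENNReal.lintegral_Lp_add_le (hf.edist hg).aemeasurable (hg.edist hh).aemeasurable hp

lemma tendsto_lintegral_edist_nearestPt_rpow {μ : Measure S} {e : ℕ → S} (he : DenseRange e)
    (hp : 0 < p) (hμ : emoment p (e 0) μ ≠ ∞) :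
    Tendsto (fun N => ∫⁻ x, edist x (SimpleFunc.nearestPt e N x) ^ p ∂μ) atTop (𝓝 0) := by
  have hmeas : ∀ N, Measurable fun x => edist x (SimpleFunc.nearestPt e N x) ^ p := fun N =>
    (measurable_id.edist (SimpleFunc.nearestPt e N).measurable).pow_const p
  have hbound : ∀ N x, edist x (SimpleFunc.nearestPt e N x) ^ p ≤ edist x (e 0) ^ p := fun N x => by
    rw [edist_comm, edist_comm x]
    exact ENNReal.rpow_le_rpow (SimpleFunc.edist_nearestPt_le e x N.zero_le) hp.le
  have hlim : ∀ x, Tendsto (fun N => edist x (SimpleFunc.nearestPt e N x) ^ p) atTop (𝓝 0) :=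
    fun x => by
    have h : Tendsto (fun N => edist x (SimpleFunc.nearestPt e N x)) atTop (𝓝 (edist x x)) :=
      tendsto_const_nhds.edist (SimpleFunc.tendsto_nearestPt (he x))
    simpa [hp] using h.ennrpow_const p
  simpa using tendsto_lintegral_of_dominated_convergence _ hmeas
    (fun N => ae_of_all _ (hbound N)) hμ (ae_of_all _ hlim)

/-- Rounding the first coordinates by `τ` changes the `L^p` norms of the distance under `γ` and
`γ'` by the same amount, which depends only on their common first marginal. -/
lemma lintegral_edist_rpow_le_of_rounded {μ ν ν' : Measure S} {γ γ' : Measure (S × S)} {τ : S → S}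
    {ε : ℝ≥0∞} (hp : 1 ≤ p) (hτ : Measurable τ) (hγ : IsCoupling γ μ ν) (hγ' : IsCoupling γ' μ ν')
    (h : ∫⁻ z, edist (τ z.1) z.2 ^ p ∂γ' ≤ ∫⁻ z, edist (τ z.1) z.2 ^ p ∂γ + ε) :
    ∫⁻ z, edist z.1 z.2 ^ p ∂γ' ≤ ((∫⁻ x, edist x (τ x) ^ p ∂μ) ^ (1 / p) +
      (((∫⁻ x, edist x (τ x) ^ p ∂μ) ^ (1 / p) + (∫⁻ z, edist z.1 z.2 ^ p ∂γ) ^ (1 / p)) ^ p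
        + ε) ^ (1 / p)) ^ p := by
  have hp₀ : 0 < p := zero_lt_one.trans_le hp
  have hτ₁ : Measurable fun z : S × S => τ z.1 := hτ.comp measurable_fst
  have hmeas : Measurable fun x => edist x (τ x) ^ p := (measurable_id.edist hτ).pow_const p
  have hγ_le : ∫⁻ z, edist (τ z.1) z.2 ^ p ∂γ ≤
      ((∫⁻ x, edist x (τ x) ^ p ∂μ) ^ (1 / p) +
        (∫⁻ z, edist z.1 z.2 ^ p ∂γ) ^ (1 / p)) ^ p := by
    rw [← ENNReal.rpow_inv_le_iff hp₀, ← one_div, ← hγ.lintegral_fst hmeas]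
    simp_rw [edist_comm _ (τ _)]
    exact lintegral_edist_rpow_triangle hp hτ₁ measurable_fst measurable_snd
  rw [← ENNReal.rpow_inv_le_iff hp₀, ← one_div, ← hγ'.lintegral_fst hmeas]
  refine (lintegral_edist_rpow_triangle hp measurable_fst hτ₁ measurable_snd).trans ?_
  rw [hγ'.lintegral_fst hmeas]
  gcongr
  exact h.trans (by gcongr)

end PseudoEMetric

variable [MetricSpace S] [OpensMeasurableSpace S] {Ω : Type*} [MeasurableSpace Ω]
  {κ : Kernel Ω S} {p₀ : Measure S}

lemma MemWp.exists_seq_kernel_isCoupling_simpleFunc [IsMarkovKernel κ] (hp₀ : MemWp p p₀)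
    (hp : 1 ≤ p) (τ : SimpleFunc S S) {ε : ℝ≥0∞} (hε : ε ≠ 0) :
    ∃ K : ℕ → Kernel Ω (S × S), (∀ k ω, IsCoupling (K k ω) (κ ω) p₀) ∧
      ∀ ω γ, IsCoupling γ (κ ω) p₀ →
        ∃ k, ∫⁻ z, edist (τ z.1) z.2 ^ p ∂K k ω ≤ ∫⁻ z, edist (τ z.1) z.2 ^ p ∂γ + ε := by
  have := hp₀.1
  have : Nonempty S := hp₀.nonempty
  have : Finite (Set.range τ) := τ.finite_range
  refine exists_seq_kernel_isCoupling_lintegral_label_le κ p₀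
    (τ := Set.rangeFactorization τ) (c := fun i y => edist i.1 y ^ p)
    (τ.measurable.subtype_mk) (fun i => ?_) (fun i => ?_) hε
  · simp_rw [edist_comm i.1]
    fun_prop
  · simp_rw [edist_comm i.1]
    exact hp₀.emoment_ne_top hp i.1

variable [SecondCountableTopology S]

lemma MemWp.exists_seq_seq_kernel_isCoupling (hκ : ∀ ω, MemWp p (κ ω)) (hp₀ : MemWp p p₀)
    (hp : 1 ≤ p) :
    ∃ K : ℕ → ℕ → Kernel Ω (S × S), (∀ N k ω, IsCoupling (K N k ω) (κ ω) p₀) ∧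
      ∀ ω γ, IsCoupling γ (κ ω) p₀ → ∀ C > ∫⁻ z, edist z.1 z.2 ^ p ∂γ,
        ∃ N k, ∫⁻ z, edist z.1 z.2 ^ p ∂K N k ω ≤ C := by
  have hp_pos : 0 < p := zero_lt_one.trans_le hp
  have : IsMarkovKernel κ := ⟨fun ω => (hκ ω).1⟩
  have : Nonempty S := hp₀.nonempty
  let τ := SimpleFunc.nearestPt (TopologicalSpace.denseSeq S)
  choose K hK hK_le using fun N : ℕ =>
    hp₀.exists_seq_kernel_isCoupling_simpleFunc (κ := κ) hp (τ N)
      (ε := (N : ℝ≥0∞)⁻¹) (ENNReal.inv_ne_zero.2 (ENNReal.natCast_ne_top N))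
  refine ⟨K, hK, fun ω γ hγ C hC => ?_⟩
  let δ : ℕ → ℝ≥0∞ := fun N => ∫⁻ x, edist x (τ N x) ^ p ∂κ ω
  let W := ∫⁻ z, edist z.1 z.2 ^ p ∂γ
  let bound : ℝ≥0∞ × ℝ≥0∞ → ℝ≥0∞ := fun z =>
    (z.1 ^ (1 / p) + ((z.1 ^ (1 / p) + W ^ (1 / p)) ^ p + z.2) ^ (1 / p)) ^ p
  have hlim : Tendsto (fun N : ℕ => bound (δ N, (N : ℝ≥0∞)⁻¹)) atTop (𝓝 W) := by
    have hδ : Tendsto δ atTop (𝓝 0) := tendsto_lintegral_edist_nearestPt_rpow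
      (TopologicalSpace.denseRange_denseSeq S) hp_pos ((hκ ω).emoment_ne_top hp _)
    have hbound_cont : Continuous bound := by fun_prop
    have hbound_zero : bound (0, 0) = W := by
      simp [bound, hp_pos, hp_pos.ne', ← ENNReal.rpow_mul]
    rw [← hbound_zero]
    exact (hbound_cont.tendsto _).comp (hδ.prodMk_nhds ENNReal.tendsto_inv_nat_nhds_zero)
  obtain ⟨N, hN⟩ := (hlim.eventually_lt_const hC).exists
  obtain ⟨k, hk⟩ := hK_le N ω γ hγ
  exact ⟨N, k, (lintegral_edist_rpow_le_of_rounded hp (τ N).measurable hγ (hK N k ω) hk).trans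
    hN.le⟩

lemma MemWp.exists_seq_kernel_iInf_eq_wassCost (hκ : ∀ ω, MemWp p (κ ω)) (hp₀ : MemWp p p₀)
    (hp : 1 ≤ p) :
    ∃ K : ℕ → Kernel Ω (S × S), (∀ j ω, IsCoupling (K j ω) (κ ω) p₀) ∧
      ∀ ω, ⨅ j, ∫⁻ z, edist z.1 z.2 ^ p ∂K j ω = wassCost p (κ ω) p₀ := by
  obtain ⟨K, hK, hK_le⟩ := hp₀.exists_seq_seq_kernel_isCoupling hκ hp
  refine ⟨fun j => K j.unpair.1 j.unpair.2, fun j ω => hK _ _ ω, fun ω => le_antisymm ?_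
    (le_iInf fun j => transportCost_le (hK _ _ ω))⟩
  refine le_iInf₂ fun γ hγ => le_of_forall_gt_imp_ge_of_dense fun C hC => ?_
  obtain ⟨N, k, hNk⟩ := hK_le ω γ hγ C hC
  refine iInf_le_of_le (Nat.pair N k) ?_
  simpa only [Nat.unpair_pair]

lemma measurable_lintegral_edist_rpow (K : Kernel Ω (S × S)) :
    Measurable fun ω => ∫⁻ z, edist z.1 z.2 ^ p ∂K ω :=
  (measurable_edist.pow_const p).lintegral_kernel

lemma MemWp.measurable_wassCost (hκ : ∀ ω, MemWp p (κ ω)) (hp₀ : MemWp p p₀)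
    (hp : 1 ≤ p) : Measurable fun ω => wassCost p (κ ω) p₀ := by
  obtain ⟨K, -, hK_iInf⟩ := hp₀.exists_seq_kernel_iInf_eq_wassCost hκ hp
  simp_rw [← hK_iInf]
  exact .iInf fun j => measurable_lintegral_edist_rpow (K j)

theorem MemWp.exists_kernel_isCoupling_le_wassCost_add (hκ : ∀ ω, MemWp p (κ ω))
    (hp₀ : MemWp p p₀) (hp : 1 ≤ p) {ε : ℝ≥0∞} (hε : ε ≠ 0) :
    ∃ K : Kernel Ω (S × S), (∀ ω, IsCoupling (K ω) (κ ω) p₀) ∧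
      ∀ ω, ∫⁻ z, edist z.1 z.2 ^ p ∂K ω ≤ wassCost p (κ ω) p₀ + ε := by
  classical
  obtain ⟨K, hK, hK_iInf⟩ := hp₀.exists_seq_kernel_iInf_eq_wassCost hκ hp
  have hnear : ∀ ω, ∃ j, ∫⁻ z, edist z.1 z.2 ^ p ∂K j ω ≤ wassCost p (κ ω) p₀ + ε := fun ω => by
    obtain ⟨j, hj⟩ := iInf_lt_iff.1 <| (hK_iInf ω).trans_lt
      (ENNReal.lt_add_right ((hκ ω).wassCost_ne_top hp₀ hp) hε)
    exact ⟨j, hj.le⟩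
  have hmeas : Measurable fun ω => K (Nat.find (hnear ω)) ω :=
    Measurable.find (fun j => (K j).measurable) (fun j =>
      measurableSet_le (measurable_lintegral_edist_rpow (K j))
        ((hp₀.measurable_wassCost hκ hp).add_const ε)) hnear
  exact ⟨⟨_, hmeas⟩, fun ω => hK _ ω, fun ω => Nat.find_spec (hnear ω)⟩

end Selection

section Empirical

variable {ι Ω S X : Type*} [Fintype ι] [MeasurableSpace Ω] [MeasurableSpace S] [MeasurableSpace X]

/-- The empirical measure of a finite family of points. -/
def empMeasure (v : ι → S) : Measure S :=
  (Fintype.card ι : ℝ≥0∞)⁻¹ • ∑ i, Measure.dirac (v i)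

lemma empShift_eq_empMeasure (n m : ℕ) (ω : ℕ → S) :
    empShift n m ω = empMeasure fun i : Fin m => ω (i + n) := by
  rw [empShift, empMeasure, Finset.sum_range, Fintype.card_fin]

lemma lintegral_empMeasure (v : ι → S) {f : S → ℝ≥0∞} (hf : Measurable f) :
    ∫⁻ x, f x ∂empMeasure v = (Fintype.card ι : ℝ≥0∞)⁻¹ * ∑ i, f (v i) := by
  simp [empMeasure, lintegral_finsetSum_measure, lintegral_dirac' _ hf]

lemma measurable_empMeasure : Measurable (empMeasure : (ι → S) → Measure S) := by
  refine Measure.measurable_of_measurable_coe _ fun B hB => ?_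
  simp only [← lintegral_indicator_one hB,
    lintegral_empMeasure _ (measurable_one.indicator hB)]
  have : Measurable (B.indicator (1 : S → ℝ≥0∞)) := measurable_one.indicator hB
  fun_prop

lemma map_empMeasure {f : S → X} (hf : Measurable f) (v : ι → S) :
    (empMeasure v).map f = empMeasure fun i => f (v i) := by
  simp_rw [empMeasure, Measure.map_smul, ← Measure.mapₗ_apply_of_measurable hf, map_sum,
    Measure.mapₗ_apply_of_measurable hf, Measure.map_dirac' hf]

lemma card_inv_mul_sum_const [Nonempty ι] (a : ℝ≥0∞) :
    (Fintype.card ι : ℝ≥0∞)⁻¹ * ∑ _i : ι, a = a := by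
  rw [Finset.sum_const, Finset.card_univ, nsmul_eq_mul, ← mul_assoc, ENNReal.inv_mul_cancel
    (Nat.cast_ne_zero.2 Fintype.card_ne_zero) (ENNReal.natCast_ne_top _), one_mul]

instance [Nonempty ι] (v : ι → S) : IsProbabilityMeasure (empMeasure v) :=
  ⟨by simpa using (lintegral_empMeasure v measurable_one).trans (card_inv_mul_sum_const (ι := ι) 1)⟩

variable (ι) in
/-- The law of the empirical measure of `ι`-many independent samples from `κ ω`. -/
def empiricalKernel (κ : Kernel Ω S) [IsMarkovKernel κ] : Kernel Ω (Measure S) where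
  toFun ω := (Measure.pi fun _ : ι => κ ω).map empMeasure
  measurable' := by
    refine (Measure.measurable_map _ measurable_empMeasure).comp ?_
    refine Measurable.measure_of_isPiSystem_of_isProbabilityMeasure generateFrom_pi.symm
      isPiSystem_pi ?_
    rintro _ ⟨s, hs, rfl⟩
    simp_rw [Measure.pi_pi]
    exact Finset.measurable_prod _ fun i _ => κ.measurable_coe (hs i trivial)

section EmpiricalKernel

variable (κ : Kernel Ω S) [IsMarkovKernel κ]

lemma empiricalKernel_apply (ω : Ω) :
    empiricalKernel ι κ ω = (Measure.pi fun _ : ι => κ ω).map empMeasure :=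
  rfl

instance : IsMarkovKernel (empiricalKernel ι κ) :=
  ⟨fun _ => Measure.isProbabilityMeasure_map measurable_empMeasure.aemeasurable⟩

lemma map_empiricalKernel {f : S → X} (hf : Measurable f) [IsMarkovKernel (κ.map f)] :
    (empiricalKernel ι κ).map (fun μ => μ.map f) = empiricalKernel ι (κ.map f) := by
  ext1 ω
  have hpi := Measure.pi_map_pi (μ := fun _ : ι => κ ω) (f := fun _ => f) fun _ => hf.aemeasurable
  rw [Kernel.map_apply _ (Measure.measurable_map f hf)]
  simp_rw [empiricalKernel_apply, Kernel.map_apply _ hf]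
  rw [← hpi, Measure.map_map (Measure.measurable_map f hf) measurable_empMeasure,
    Measure.map_map measurable_empMeasure (by fun_prop)]
  exact congrArg (Measure.map · _) (funext fun v => map_empMeasure hf v)

lemma empiricalKernel_const (p₀ : Measure S) [IsProbabilityMeasure p₀] :
    empiricalKernel ι (Kernel.const Ω p₀) =
      Kernel.const Ω ((Measure.pi fun _ : ι => p₀).map empMeasure) :=
  rfl

lemma lintegral_empiricalKernel [Nonempty ι] {f : S → ℝ≥0∞} (hf : Measurable f) (ω : Ω) :
    ∫⁻ μ, ∫⁻ x, f x ∂μ ∂empiricalKernel ι κ ω = ∫⁻ x, f x ∂κ ω := by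
  have heval : ∀ i : ι, ∫⁻ v, f (v i) ∂Measure.pi (fun _ : ι => κ ω) = ∫⁻ x, f x ∂κ ω := fun i =>
    (measurePreserving_eval (fun _ : ι => κ ω) i).lintegral_comp hf
  rw [empiricalKernel_apply, lintegral_map (Measure.measurable_lintegral hf) measurable_empMeasure]
  simp_rw [lintegral_empMeasure _ hf]
  rw [lintegral_const_mul _ (by fun_prop), lintegral_finsetSum _ fun i _ => by fun_prop]
  simp_rw [heval, card_inv_mul_sum_const]

lemma lintegral_empiricalKernel_comp [Nonempty ι] (P : Measure Ω) {f : S → ℝ≥0∞}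
    (hf : Measurable f) :
    ∫⁻ μ, ∫⁻ x, f x ∂μ ∂(empiricalKernel ι κ ∘ₘ P) = ∫⁻ ω, ∫⁻ x, f x ∂κ ω ∂P := by
  rw [Measure.lintegral_bind (Kernel.aemeasurable _) (Measure.measurable_lintegral hf).aemeasurable]
  simp_rw [lintegral_empiricalKernel κ hf]

end EmpiricalKernel

lemma map_shift_eq_pi {μ : Measure (ℕ → S)} {𝔭 : Measure S} [IsProbabilityMeasure 𝔭]
    (h : ∀ (n : ℕ) (A : Fin n → Set S), (∀ i, MeasurableSet (A i)) →
      μ {ω | ∀ i : Fin n, ω (i : ℕ) ∈ A i} = ∏ i, 𝔭 (A i)) (n m : ℕ) :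
    μ.map (fun ω (i : Fin m) => ω (i + n)) = Measure.pi fun _ => 𝔭 := by
  refine (Measure.pi_eq fun s hs => ?_).symm
  rw [Measure.map_apply (by fun_prop) (MeasurableSet.univ_pi hs)]
  have hcyl := h (n + m) (Fin.addCases (fun _ => Set.univ) s)
    (Fin.addCases (fun i => by simp) fun i => by simpa using hs i)
  simp only [Fin.prod_univ_add, Fin.addCases_left, Fin.addCases_right, measure_univ,
    Finset.prod_const_one, one_mul] at hcyl
  rw [← hcyl]
  congr 1
  ext ω
  simp [Set.mem_pi, Fin.forall_fin_add, add_comm n]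

lemma map_empShift {μ : Measure (ℕ → S)} {𝔭 : Measure S} [IsProbabilityMeasure 𝔭]
    (h : ∀ (n : ℕ) (A : Fin n → Set S), (∀ i, MeasurableSet (A i)) →
      μ {ω | ∀ i : Fin n, ω (i : ℕ) ∈ A i} = ∏ i, 𝔭 (A i)) (n m : ℕ) :
    μ.map (empShift n m) = (Measure.pi fun _ : Fin m => 𝔭).map empMeasure := by
  rw [← map_shift_eq_pi h n m, Measure.map_map measurable_empMeasure (by fun_prop)]
  exact congrArg (Measure.map · μ) (funext (empShift_eq_empMeasure n m))

lemma measurable_empShift (n m : ℕ) : Measurable (empShift n m : (ℕ → S) → Measure S) := by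
  rw [funext (empShift_eq_empMeasure n m)]
  exact measurable_empMeasure.comp (by fun_prop)

end Empirical

section Contraction

variable {ι Ω S : Type*} [Fintype ι] [Nonempty ι] [MeasurableSpace Ω] [MeasurableSpace S]
  [MetricSpace S] [OpensMeasurableSpace S] {p : ℝ} {p₀ : Measure S} {κ : Kernel Ω S}

lemma memWp_empMeasure (hp : 1 ≤ p) (v : ι → S) : MemWp p (empMeasure v) := by
  have hp₀ : 0 ≤ p := zero_le_one.trans hp
  have x₀ : S := v (Classical.arbitrary ι)
  refine (memWp_iff hp x₀).2 ⟨inferInstance, ?_⟩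
  rw [emoment, lintegral_empMeasure v (by fun_prop)]
  exact ENNReal.mul_ne_top (ENNReal.inv_ne_top.2 (Nat.cast_ne_zero.2 Fintype.card_ne_zero))
    (ENNReal.sum_ne_top.2 fun i _ =>
      (ENNReal.rpow_lt_top_of_nonneg hp₀ (edist_ne_top _ _)).ne)

lemma ae_memWp_empiricalKernel_comp [IsMarkovKernel κ] (hp : 1 ≤ p) (P : Measure Ω) :
    ∀ᵐ μ ∂(empiricalKernel ι κ ∘ₘ P), MemWp p μ :=
  Measure.ae_comp_of_ae_ae (measurableSet_memWp hp) <| ae_of_all _ fun _ =>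
    (ae_map_iff measurable_empMeasure.aemeasurable (measurableSet_memWp hp)).2 <|
      ae_of_all _ (memWp_empMeasure hp)

/-- Passing to empirical measures preserves mean moments, and the mean moments of a random measure
and its mean cost from a fixed measure are finite together. -/
lemma lintegral_wassCost_ne_top [IsMarkovKernel κ] [IsProbabilityMeasure p₀] (hp₀ : MemWp p p₀)
    (hp : 1 ≤ p) {P : Measure Ω} [IsProbabilityMeasure P]
    (h : transportCost (wassCost p) (empiricalKernel ι κ ∘ₘ P)
      (empiricalKernel ι (Kernel.const Ω p₀) ∘ₘ P) ≠ ∞) :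
    ∫⁻ ω, wassCost p (κ ω) p₀ ∂P ≠ ∞ := by
  obtain ⟨x₀⟩ := hp₀.nonempty
  have hp₀_top := hp₀.emoment_ne_top hp x₀
  have hmean : ∀ (η : Kernel Ω S) [IsMarkovKernel η],
      ∫⁻ μ, emoment p x₀ μ ∂(empiricalKernel ι η ∘ₘ P) = ∫⁻ ω, emoment p x₀ (η ω) ∂P := fun η _ =>
    lintegral_empiricalKernel_comp η P (measurable_edist_rpow_const p x₀)
  have hmoment : ∫⁻ ω, emoment p x₀ (κ ω) ∂P ≠ ∞ := by
    rw [← hmean κ]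
    refine ne_top_of_le_ne_top ?_ (lintegral_le_mul_transportCost_add
      (ν := empiricalKernel ι (Kernel.const Ω p₀) ∘ₘ P) (measurable_emoment p x₀)
      (measurable_emoment p x₀) (ENNReal.rpow_pos two_pos ENNReal.ofNat_ne_top).ne'
      (two_rpow_ne_top _) fun μ ν => emoment_le_wassCost_add hp x₀)
    rw [hmean (Kernel.const Ω p₀)]
    simpa [ENNReal.mul_eq_top, two_rpow_ne_top] using ⟨h, hp₀_top⟩
  refine ne_top_of_le_ne_top ?_ (lintegral_mono fun ω =>
    (transportCost_le (isCoupling_prod (κ ω) p₀)).trans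
      ((isCoupling_prod (κ ω) p₀).lintegral_edist_rpow_le hp x₀))
  rw [lintegral_const_mul' _ _ (two_rpow_ne_top _), lintegral_add_right _ measurable_const]
  simpa [ENNReal.mul_eq_top, two_rpow_ne_top] using ⟨hmoment, hp₀_top⟩

variable [SecondCountableTopology S]

lemma transportCost_empiricalKernel_le_lintegral_isCoupling [IsMarkovKernel κ]
    [IsProbabilityMeasure p₀] {K : Kernel Ω (S × S)} (hK : ∀ ω, IsCoupling (K ω) (κ ω) p₀)
    (P : Measure Ω) :
    transportCost (wassCost p) (empiricalKernel ι κ ∘ₘ P)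
        (empiricalKernel ι (Kernel.const Ω p₀) ∘ₘ P)
      ≤ ∫⁻ ω, ∫⁻ z, edist z.1 z.2 ^ p ∂K ω ∂P := by
  have : IsMarkovKernel K := ⟨fun ω => (hK ω).isProbabilityMeasure⟩
  have hfst : κ = K.map Prod.fst := by
    ext1 ω
    rw [Kernel.map_apply _ measurable_fst, (hK ω).map_fst]
  have hsnd : Kernel.const Ω p₀ = K.map Prod.snd := by
    ext1 ω
    rw [Kernel.map_apply _ measurable_snd, (hK ω).map_snd, Kernel.const_apply]
  have hmap : ∀ {f : S × S → S}, Measurable f → ∀ [IsMarkovKernel (K.map f)],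
      empiricalKernel ι (K.map f) ∘ₘ P = (empiricalKernel ι K ∘ₘ P).map fun μ => μ.map f := by
    intro f hf _
    rw [Measure.map_comp _ _ (Measure.measurable_map _ hf), map_empiricalKernel K hf]
  rw [← lintegral_empiricalKernel_comp (ι := ι) K P (measurable_edist.pow_const p)]
  subst hfst
  have : IsMarkovKernel (K.map Prod.snd) := hsnd ▸ inferInstance
  simp only [hsnd, hmap measurable_fst, hmap measurable_snd]
  exact transportCost_transportCost_map_le (fun x y => edist x y ^ p) _

lemma transportCost_empiricalKernel_le (hκ : ∀ ω, MemWp p (κ ω)) [IsMarkovKernel κ]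
    [IsProbabilityMeasure p₀] (hp₀ : MemWp p p₀) (hp : 1 ≤ p) (P : Measure Ω)
    [IsProbabilityMeasure P] :
    transportCost (wassCost p) (empiricalKernel ι κ ∘ₘ P)
        (empiricalKernel ι (Kernel.const Ω p₀) ∘ₘ P)
      ≤ ∫⁻ ω, wassCost p (κ ω) p₀ ∂P := by
  refine ENNReal.le_of_forall_pos_le_add fun ε hε _ => ?_
  obtain ⟨K, hK, hK_le⟩ :=
    hp₀.exists_kernel_isCoupling_le_wassCost_add hκ hp (ENNReal.coe_ne_zero.2 hε.ne')
  calc transportCost (wassCost p) (empiricalKernel ι κ ∘ₘ P)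
        (empiricalKernel ι (Kernel.const Ω p₀) ∘ₘ P)
      ≤ ∫⁻ ω, ∫⁻ z, edist z.1 z.2 ^ p ∂K ω ∂P :=
        transportCost_empiricalKernel_le_lintegral_isCoupling hK P
    _ ≤ ∫⁻ ω, (wassCost p (κ ω) p₀ + ε) ∂P := lintegral_mono hK_le
    _ = ∫⁻ ω, wassCost p (κ ω) p₀ ∂P + ε := by
      rw [lintegral_add_right _ measurable_const, lintegral_const, measure_univ, mul_one]

theorem wassW_empiricalKernel_le (hκ : ∀ ω, MemWp p (κ ω)) [IsMarkovKernel κ]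
    [IsProbabilityMeasure p₀] (hp₀ : MemWp p p₀) (hp : 1 ≤ p) (P : Measure Ω)
    [IsProbabilityMeasure P] :
    wassW (fun μ ν => wassW (fun u v => dist u v) p μ ν) p (empiricalKernel ι κ ∘ₘ P)
        (empiricalKernel ι (Kernel.const Ω p₀) ∘ₘ P)
      ≤ (∫⁻ ω, wassCost p (κ ω) p₀ ∂P).toReal ^ (1 / p) := by
  have hp_pos : 0 < p := zero_lt_one.trans_le hp
  refine (wassW_le_toReal_transportCost_rpow (fun _ _ => wassW_nonneg fun _ _ => dist_nonneg) hp_pos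
    (isCoupling_prod _ _)).trans ?_
  rw [transportCost_congr_ae (ae_memWp_empiricalKernel_comp hp P)
    (ae_memWp_empiricalKernel_comp hp P) fun μ ν hμ hν => ofReal_wassW_dist_rpow hμ hν hp]
  refine Real.rpow_le_rpow ENNReal.toReal_nonneg ?_ (one_div_nonneg.2 hp_pos.le)
  by_cases h : transportCost (wassCost p) (empiricalKernel ι κ ∘ₘ P)
      (empiricalKernel ι (Kernel.const Ω p₀) ∘ₘ P) = ∞
  · simp [h]
  · exact ENNReal.toReal_mono (lintegral_wassCost_ne_top hp₀ hp h)
      (transportCost_empiricalKernel_le hκ hp₀ hp P)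

lemma wassW_dirac_right_eq_lintegral_wassCost {ζ : Measure (Measure S)} [IsProbabilityMeasure ζ]
    [MeasurableSpace.CountablyGenerated S]
    {κ : Kernel (Measure S) S} (hκ : ∀ 𝔭, MemWp p (κ 𝔭)) (hκζ : ∀ᵐ 𝔭 ∂ζ, κ 𝔭 = 𝔭)
    (hp₀ : MemWp p p₀) (hp : 1 ≤ p) :
    wassW (fun μ ν => wassW (fun u v => dist u v) p μ ν) p ζ (Measure.dirac p₀) =
      (∫⁻ 𝔭, wassCost p (κ 𝔭) p₀ ∂ζ).toReal ^ (1 / p) := by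
  have := hp₀.1
  have hmeas : Measurable fun 𝔭 => wassCost p (κ 𝔭) p₀ := hp₀.measurable_wassCost hκ hp
  have hcost : (fun 𝔭 => wassW (fun u v => dist u v) p 𝔭 p₀ ^ p) =ᵐ[ζ]
      fun 𝔭 => (wassCost p (κ 𝔭) p₀).toReal := by
    filter_upwards [hκζ] with 𝔭 h
    rw [← ofReal_wassW_dist_rpow (hκ 𝔭) hp₀ hp, h, ENNReal.toReal_ofReal
      (Real.rpow_nonneg (wassW_nonneg fun _ _ => dist_nonneg) p)]
  rw [wassW_dirac_right (measurableSet_singleton_of_isFiniteMeasure p₀)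
    (hmeas.ennreal_toReal.aestronglyMeasurable.congr hcost.symm), integral_congr_ae hcost,
    integral_toReal hmeas.aemeasurable
      (ae_of_all _ fun 𝔭 => ((hκ 𝔭).wassCost_ne_top hp₀ hp).lt_top)]

end Contraction

lemma MemWp.exists_kernel_eq_self {S : Type*} [MeasurableSpace S] [MetricSpace S]
    [OpensMeasurableSpace S] {p : ℝ} {p₀ : Measure S} (hp₀ : MemWp p p₀) (hp : 1 ≤ p) :
    ∃ κ : Kernel (Measure S) S, (∀ 𝔭, MemWp p (κ 𝔭)) ∧ ∀ 𝔭, MemWp p 𝔭 → κ 𝔭 = 𝔭 := by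
  classical
  refine ⟨Kernel.piecewise (measurableSet_memWp hp) ⟨id, measurable_id⟩ (Kernel.const _ p₀),
    fun 𝔭 => ?_, fun 𝔭 h => if_pos h⟩
  rw [Kernel.piecewise_apply]
  split_ifs with h
  · exact h
  · exact hp₀

lemma map_empShift_bind_eq_empiricalKernel_comp {S : Type*} [MeasurableSpace S]
    {iid : Measure S → Measure (ℕ → S)} (hiid_meas : Measurable iid)
    (hiid : ∀ 𝔭 : Measure S, IsProbabilityMeasure 𝔭 →
      ∀ (n : ℕ) (A : Fin n → Set S), (∀ i, MeasurableSet (A i)) →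
        iid 𝔭 {ω | ∀ i : Fin n, ω (i : ℕ) ∈ A i} = ∏ i, 𝔭 (A i))
    {ζ : Measure (Measure S)} {κ : Kernel (Measure S) S} [IsMarkovKernel κ]
    (hκζ : ∀ᵐ 𝔭 ∂ζ, κ 𝔭 = 𝔭) (n m : ℕ) :
    (ζ.bind iid).map (empShift n m) = empiricalKernel (Fin m) κ ∘ₘ ζ := by
  let iidKernel : Kernel (Measure S) (ℕ → S) := ⟨iid, hiid_meas⟩
  refine (Measure.map_comp ζ iidKernel (measurable_empShift n m)).trans
    (Measure.bind_congr_right ?_)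
  filter_upwards [hκζ] with 𝔭 h
  have : IsProbabilityMeasure 𝔭 := h ▸ inferInstanceAs (IsProbabilityMeasure (κ 𝔭))
  rw [Kernel.map_apply _ (measurable_empShift n m), empiricalKernel_apply, h]
  exact map_empShift (hiid 𝔭 this) n m

theorem mixture_empirical_wasserstein_contraction_general
    {S : Type*} [MetricSpace S] [TopologicalSpace.SeparableSpace S]
    [MeasurableSpace S] [BorelSpace S] {p : ℝ} (hp : 1 ≤ p)
    {iid : Measure S → Measure (ℕ → S)} (hiid_meas : Measurable iid)
    (hiid : ∀ 𝔭 : Measure S, IsProbabilityMeasure 𝔭 →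
      ∀ (n : ℕ) (A : Fin n → Set S), (∀ i, MeasurableSet (A i)) →
        iid 𝔭 {ω | ∀ i : Fin n, ω (i : ℕ) ∈ A i} = ∏ i, 𝔭 (A i))
    {p₀ : Measure S} (hp₀ : MemWp p p₀)
    (ζ : Measure (Measure S)) [IsProbabilityMeasure ζ] (hζp : ∀ᵐ 𝔭 ∂ζ, MemWp p 𝔭)
    (n m : ℕ) (hm : 1 ≤ m) :
    wassW (fun μ ν => wassW (fun u v => dist u v) p μ ν) p
        ((ζ.bind iid).map (empShift n m)) ((iid p₀).map (empShift n m))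
      ≤ wassW (fun μ ν => wassW (fun u v => dist u v) p μ ν) p ζ (Measure.dirac p₀) := by
  have : SecondCountableTopology S := UniformSpace.secondCountable_of_separable S
  have : Nonempty (Fin m) := Fin.pos_iff_nonempty.1 hm
  have : IsProbabilityMeasure p₀ := hp₀.1
  obtain ⟨κ, hκ, hκ_self⟩ := hp₀.exists_kernel_eq_self hp
  have : IsMarkovKernel κ := ⟨fun 𝔭 => (hκ 𝔭).1⟩
  have hκζ : ∀ᵐ 𝔭 ∂ζ, κ 𝔭 = 𝔭 := hζp.mono hκ_self
  have hp₀_law : (iid p₀).map (empShift n m) =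
      empiricalKernel (Fin m) (Kernel.const _ p₀) ∘ₘ ζ := by
    rw [empiricalKernel_const, Measure.const_comp, measure_univ, one_smul,
      map_empShift (hiid p₀ hp₀.1) n m]
  rw [map_empShift_bind_eq_empiricalKernel_comp hiid_meas hiid hκζ, hp₀_law,
    wassW_dirac_right_eq_lintegral_wassCost hκ hκζ hp₀ hp]
  exact wassW_empiricalKernel_le hκ hp₀ hp ζ

/-- contraction of the Wasserstein distance under the empirical map:
`d^{(p)}_{[[S]_p]}( ρ[ζ] ∘ ẽ_{n,m}⁻¹, p₀^∞ ∘ ẽ_{n,m}⁻¹ ) ≤ d^{(p)}_{[[S]_p]}( ζ, δ_{p₀} )`,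
where `ρ[ζ] = ∫ 𝔭^∞ ζ(d𝔭)`. -/
theorem mixture_empirical_wasserstein_contraction
    {S : Type*} [MetricSpace S] [TopologicalSpace.SeparableSpace S]
    [MeasurableSpace S] [BorelSpace S]
    (hRadon : ∀ μ : Measure S, IsProbabilityMeasure μ → μ.InnerRegular)
    (p : ℝ) (hp : 1 ≤ p)
    -- the product-measure map `𝔭 ↦ 𝔭^∞`
    (iid : Measure S → Measure (ℕ → S)) (hiid_meas : Measurable iid)
    (hiid : ∀ 𝔭 : Measure S, IsProbabilityMeasure 𝔭 →
      IsProbabilityMeasure (iid 𝔭) ∧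
        ∀ (n : ℕ) (A : Fin n → Set S), (∀ i, MeasurableSet (A i)) →
          iid 𝔭 {ω | ∀ i : Fin n, ω (i : ℕ) ∈ A i} = ∏ i, 𝔭 (A i))
    (p₀ : Measure S) (hp₀ : MemWp p p₀)
    (ζ : Measure (Measure S)) (hζ : IsProbabilityMeasure ζ)
    (hζp : ∀ᵐ 𝔭 ∂ζ, MemWp p 𝔭)
    (n m : ℕ) (hm : 1 ≤ m) :
    wassW (fun μ ν => wassW (fun u v => dist u v) p μ ν) p
        ((ζ.bind iid).map (empShift n m)) ((iid p₀).map (empShift n m))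
      ≤ wassW (fun μ ν => wassW (fun u v => dist u v) p μ ν) p ζ (Measure.dirac p₀) :=
  mixture_empirical_wasserstein_contraction_general hp hiid_meas (fun 𝔭 h => (hiid 𝔭 h).2)
    hp₀ ζ hζp n m hm

end
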